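/- Let R be a 3-dimensional regular local ring with maximal ideal m = (x, y, z), and let I be the ideal generated by the maximal minors of ((x, y, z), (y, z, x²)). Then for every n ≥ 2 and every 1 ≤ k ≤ ⌊n/2⌋, length_R((Iⁿ :_R m^k)/(Iⁿ :_R m^{k−1})) = C(n − 2k + 2, 2). -/

import Mathlib

open IsLocalRing

/-- `M` has (finite) length `n` over `R`: there is a composition series from
`⊥` to `⊤` of length `n`. -/
def HasLength (R M : Type*) [CommRing R] [AddCommGroup M] [Module R M] (n : ℕ) : Prop :=
  ∃ s : CompositionSeries (Submodule R M), s.head = ⊥ ∧ s.last = ⊤ ∧ s.length = n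

namespace IsLocalRing

lemma maximalIdeal_quotient_eq_map {R : Type*} [CommRing R] [IsLocalRing R] (I : Ideal R)
    [IsLocalRing (R ⧸ I)] :
    maximalIdeal (R ⧸ I) = (maximalIdeal R).map (Ideal.Quotient.mk I) := by
  have hloc : IsLocalHom (Ideal.Quotient.mk I) :=
    IsLocalHom.of_surjective _ Ideal.Quotient.mk_surjective
  apply le_antisymm
  · intro a ha
    obtain ⟨r, rfl⟩ := Ideal.Quotient.mk_surjective a
    refine Ideal.mem_map_of_mem _ ?_
    rw [mem_maximalIdeal, mem_nonunits_iff] at ha ⊢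
    exact fun h => ha (h.map _)
  · exact ((local_hom_TFAE (Ideal.Quotient.mk I)).out 0 2).mp hloc

/-- A local Noetherian ring of dimension at least `d` whose maximal ideal has `d` generators
is a domain. -/
theorem isDomain_of_le_ringKrullDim (d : ℕ) : ∀ {R : Type*} [CommRing R] [IsNoetherianRing R]
    [IsLocalRing R] (f : Fin d → R), maximalIdeal R = Ideal.span (Set.range f) →
    d ≤ ringKrullDim R → IsDomain R := by
  induction d with
  | zero =>
    intro R _ _ _ f hf _
    have h0 : maximalIdeal R = ⊥ := by simp [hf]
    exact ((isField_iff_maximalIdeal_eq).mpr h0).isDomain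
  | succ d ih =>
    intro R _ _ _ f hf hd
    have hmin : maximalIdeal R ∉ minimalPrimes R := by
      rw [← Ideal.height_eq_zero_iff]
      intro h
      rw [← maximalIdeal_height_eq_ringKrullDim, h] at hd
      norm_cast at hd
    have hsq : ¬ maximalIdeal R ≤ maximalIdeal R ^ 2 := by
      intro h
      have h0 : maximalIdeal R = ⊥ := by
        refine Submodule.eq_bot_of_le_smul_of_le_jacobson_bot (maximalIdeal R) (maximalIdeal R)
          (IsNoetherian.noetherian _) ?_ (maximalIdeal_le_jacobson _)
        rwa [smul_eq_mul, ← pow_two]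
      apply hmin
      rw [h0]
      have hp : (⊥ : Ideal R).IsPrime := h0 ▸ inferInstance
      exact ⟨⟨hp, le_rfl⟩, fun q _ _ => bot_le⟩
    obtain ⟨t, htm, ht⟩ : ∃ t ∈ maximalIdeal R, t ∉ maximalIdeal R ^ 2 ∧
        ∀ q ∈ minimalPrimes R, t ∉ q := by
      by_contra! hcon
      have hsub := (Ideal.subset_union_prime_finite (R := R)
        (s := insert (maximalIdeal R ^ 2) (minimalPrimes R))
        ((minimalPrimes.finite_of_isNoetherianRing R).insert _) (f := id)
        (maximalIdeal R ^ 2) (maximalIdeal R ^ 2) (I := maximalIdeal R) (by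
          rintro i (rfl | hi) h1 _
          · exact absurd rfl h1
          · exact hi.1.1)).mp (by
          intro t ht
          by_cases h2 : t ∈ maximalIdeal R ^ 2
          · exact Set.mem_biUnion (Set.mem_insert _ _) h2
          · obtain ⟨q, hq, htq⟩ := hcon t ht h2
            exact Set.mem_biUnion (Set.mem_insert_of_mem _ hq) htq)
      obtain ⟨q, hq | hq, hle⟩ := hsub
      · exact hsq (hq ▸ hle)
      · have hqp : q.IsPrime := hq.1.1
        have : q = maximalIdeal R := le_antisymm (le_maximalIdeal hqp.ne_top) hle
        exact hmin (this ▸ hq)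
    obtain ⟨ht2, htq⟩ := ht
    obtain ⟨c, hc⟩ := (Ideal.mem_span_range_iff_exists_fun).mp (hf ▸ htm)
    have hfm : ∀ i, f i ∈ maximalIdeal R := fun i => hf ▸ Ideal.subset_span ⟨i, rfl⟩
    obtain ⟨j, hj⟩ : ∃ j, IsUnit (c j) := by
      by_contra! hcon
      apply ht2
      rw [← hc, pow_two]
      exact Ideal.sum_mem _ fun i _ =>
        Ideal.mul_mem_mul ((mem_maximalIdeal _).mpr (hcon i)) (hfm i)
    have htop : Ideal.span {t} ≠ ⊤ := fun h =>
      (maximalIdeal.isMaximal R).ne_top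
        (top_le_iff.mp (h ▸ (Ideal.span_singleton_le_iff_mem _).mpr htm))
    have : Nontrivial (R ⧸ Ideal.span {t}) := Ideal.Quotient.nontrivial_iff.mpr htop
    have : IsLocalRing (R ⧸ Ideal.span {t}) :=
      IsLocalRing.of_surjective' (Ideal.Quotient.mk _) Ideal.Quotient.mk_surjective
    have hdom : IsDomain (R ⧸ Ideal.span {t}) := by
      refine ih (fun i => Ideal.Quotient.mk _ (f (j.succAbove i))) ?_ ?_
      · rw [maximalIdeal_quotient_eq_map, hf, Ideal.map_span]
        apply le_antisymm
        · rw [Ideal.span_le]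
          rintro _ ⟨_, ⟨i, rfl⟩, rfl⟩
          rcases Fin.eq_self_or_eq_succAbove j i with rfl | ⟨i, rfl⟩
          · have h0 : Ideal.Quotient.mk (Ideal.span {t}) t = 0 :=
              Ideal.Quotient.eq_zero_iff_mem.mpr (Ideal.mem_span_singleton_self t)
            have h1 := congrArg (Ideal.Quotient.mk (Ideal.span {t})) hc
            rw [h0, Fin.sum_univ_succAbove _ i, map_add, map_mul, map_sum] at h1
            refine (Ideal.unit_mul_mem_iff_mem _
              (hj.map (Ideal.Quotient.mk (Ideal.span {t})))).mp ?_
            rw [eq_neg_of_add_eq_zero_left h1]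
            refine neg_mem (Ideal.sum_mem _ fun k _ => ?_)
            rw [map_mul]
            exact Ideal.mul_mem_left _ _ (Ideal.subset_span ⟨k, rfl⟩)
          · exact Ideal.subset_span ⟨i, rfl⟩
        · refine Ideal.span_mono ?_
          rintro _ ⟨i, rfl⟩
          exact ⟨_, ⟨_, rfl⟩, rfl⟩
      · have := ringKrullDim_le_ringKrullDim_quotient_add_card ({t} : Finset R) (by
          simpa [ringJacobson_eq_maximalIdeal] using htm)
        rw [Finset.coe_singleton, Finset.card_singleton] at this
        have h := hd.trans this
        rw [Nat.cast_add] at h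
        exact ENat.WithBot.add_le_add_natCast_right_iff.mp h
    have hprime : (Ideal.span {t}).IsPrime := (Ideal.Quotient.isDomain_iff_prime _).mp hdom
    obtain ⟨q, hq, hqt⟩ := Ideal.exists_minimalPrimes_le (I := ⊥) (J := Ideal.span {t}) bot_le
    have hqp : q.IsPrime := hq.1.1
    have hq0 : q = ⊥ := by
      refine Submodule.eq_bot_of_le_smul_of_le_jacobson_bot (maximalIdeal R) q
          (IsNoetherian.noetherian _) ?_ (maximalIdeal_le_jacobson _)
      intro a ha
      obtain ⟨b, rfl⟩ := Ideal.mem_span_singleton'.mp (hqt ha)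
      have hb := (hqp.mem_or_mem ha).resolve_right (htq q hq)
      rw [mul_comm, smul_eq_mul]
      exact Ideal.mul_mem_mul htm hb
    have : (⊥ : Ideal R).IsPrime := hq0 ▸ hqp
    exact IsDomain.of_bot_isPrime R

/-- If `s` and a `d`-element family together generate the maximal ideal and `dim R ≥ #s + d`,
then `s` generates a prime ideal. -/
theorem isPrime_span_of_le_ringKrullDim {R : Type*} [CommRing R] [IsNoetherianRing R]
    [IsLocalRing R] {d : ℕ} (s : Finset R) (f : Fin d → R)
    (hsf : maximalIdeal R = Ideal.span (s ∪ Set.range f))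
    (hd : ((s.card + d : ℕ) : WithBot ℕ∞) ≤ ringKrullDim R) :
    (Ideal.span (s : Set R)).IsPrime := by
  have hle : Ideal.span (s : Set R) ≤ maximalIdeal R :=
    hsf ▸ Ideal.span_mono Set.subset_union_left
  have htop : Ideal.span (s : Set R) ≠ ⊤ := fun h =>
    (maximalIdeal.isMaximal R).ne_top (top_le_iff.mp (h ▸ hle))
  have : Nontrivial (R ⧸ Ideal.span (s : Set R)) := Ideal.Quotient.nontrivial_iff.mpr htop
  have : IsLocalRing (R ⧸ Ideal.span (s : Set R)) :=
    IsLocalRing.of_surjective' (Ideal.Quotient.mk _) Ideal.Quotient.mk_surjective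
  rw [← Ideal.Quotient.isDomain_iff_prime]
  refine isDomain_of_le_ringKrullDim d (fun i => Ideal.Quotient.mk _ (f i)) ?_ ?_
  · rw [maximalIdeal_quotient_eq_map, hsf, Ideal.span_union, Ideal.map_sup, Ideal.map_quotient_self,
      bot_sup_eq, Ideal.map_span, ← Set.range_comp]
    rfl
  · have h := hd.trans (ringKrullDim_le_ringKrullDim_quotient_add_card s
      ((Ideal.subset_span.trans hle).trans (ringJacobson_eq_maximalIdeal R).ge))
    rw [add_comm s.card, Nat.cast_add] at h
    exact ENat.WithBot.add_le_add_natCast_right_iff.mp h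

/-- The maximal ideal of a local Noetherian ring cannot be generated by fewer than `dim R`
elements. -/
theorem maximalIdeal_ne_span_of_card_lt {R : Type*} [CommRing R] [IsNoetherianRing R]
    [IsLocalRing R] (s : Finset R) (hs : (s.card : WithBot ℕ∞) < ringKrullDim R) :
    maximalIdeal R ≠ Ideal.span (s : Set R) := by
  intro h
  refine hs.not_ge ((ringKrullDim_le_spanFinrank_maximalIdeal (R := R)).trans ?_)
  rw [h]
  have := Submodule.spanFinrank_span_le_ncard_of_finite (R := R) s.finite_toSet
  rw [Set.ncard_coe_finset] at this
  exact_mod_cast this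

end IsLocalRing

/-- `x` is a nonzerodivisor, `y` is one modulo `x`, and `z` is one modulo `(x, y)`. -/
structure IsRegularTriple {R : Type*} [CommRing R] (x y z : R) : Prop where
  eq_zero_of_mul : ∀ u, x * u = 0 → u = 0
  mem_of_y_mul : ∀ u, y * u ∈ Ideal.span {x} → u ∈ Ideal.span {x}
  mem_of_z_mul : ∀ u, z * u ∈ Ideal.span {x, y} → u ∈ Ideal.span {x, y}

section RegularTriple

variable {R : Type*} [CommRing R]

/-- A regular system of parameters of a 3-dimensional local ring is a regular sequence. -/
theorem IsLocalRing.isRegularTriple [IsNoetherianRing R] [IsLocalRing R]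
    (hdim : ringKrullDim R = 3) {x y z : R} (hreg : maximalIdeal R = Ideal.span {x, y, z}) :
    IsRegularTriple x y z := by
  classical
  have hdom : IsDomain R := isDomain_of_le_ringKrullDim 3 ![x, y, z]
    (by rw [hreg]; congr 1; ext; simp [eq_comm]; tauto) (by rw [hdim]; rfl)
  have hX : (Ideal.span {x}).IsPrime := by
    have := isPrime_span_of_le_ringKrullDim {x} ![y, z]
      (by rw [hreg]; congr 1; ext; simp [eq_comm]; tauto) (by rw [hdim]; simp)
    simpa using this
  have hlt : ∀ u v : R, ((({u, v} : Finset R).card : ℕ) : WithBot ℕ∞) < ringKrullDim R := by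
    intro u v
    rw [hdim]
    have : ({u, v} : Finset R).card < 3 := Nat.lt_succ_of_le Finset.card_le_two
    exact_mod_cast this
  have hXY : (Ideal.span {x, y}).IsPrime := by
    have := isPrime_span_of_le_ringKrullDim {x, y} ![z]
      (by rw [hreg]; congr 1; ext; simp [eq_comm]; tauto) (by
        rw [hdim]
        have : ({x, y} : Finset R).card + 1 ≤ 3 := Nat.succ_le_succ Finset.card_le_two
        exact_mod_cast this)
    simpa using this
  have hx0 : x ≠ 0 := by
    rintro rfl
    refine maximalIdeal_ne_span_of_card_lt {y, z} (hlt y z) ?_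
    rw [hreg]
    simp
  have hyx : y ∉ Ideal.span {x} := by
    intro hy
    refine maximalIdeal_ne_span_of_card_lt {x, z} (hlt x z) ?_
    rw [hreg]
    apply le_antisymm <;> rw [Ideal.span_le]
    · rintro _ (rfl | rfl | rfl)
      · exact Ideal.subset_span (by simp)
      · exact Ideal.span_mono (by simp) hy
      · exact Ideal.subset_span (by simp)
    · intro t ht
      refine Ideal.subset_span ?_
      simp at ht ⊢
      tauto
  have hzxy : z ∉ Ideal.span {x, y} := by
    intro hz
    refine maximalIdeal_ne_span_of_card_lt {x, y} (hlt x y) ?_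
    rw [hreg]
    apply le_antisymm <;> rw [Ideal.span_le]
    · rintro _ (rfl | rfl | rfl)
      · exact Ideal.subset_span (by simp)
      · exact Ideal.subset_span (by simp)
      · simpa using hz
    · intro t ht
      refine Ideal.subset_span ?_
      simp at ht ⊢
      tauto
  exact ⟨fun u hu => (mul_eq_zero.mp hu).resolve_left hx0,
    fun u hu => (hX.mem_or_mem hu).resolve_left hyx,
    fun u hu => (hXY.mem_or_mem hu).resolve_left hzxy⟩

/-- Elements of `K * (y, z) ^ D` are the binary forms of degree `D` in `y`, `z` with coefficients
in `K`. -/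
lemma Ideal.exists_sum_of_mem_mul_span_pair_pow (K : Ideal R) (y z : R) (D : ℕ) :
    ∀ {u : R}, u ∈ K * Ideal.span {y, z} ^ D →
      ∃ r : ℕ → R, (∀ i, r i ∈ K) ∧
        u = ∑ i ∈ Finset.range (D + 1), r i * (y ^ i * z ^ (D - i)) := by
  induction D with
  | zero =>
    intro u hu
    exact ⟨fun _ => u, fun _ => by simpa using hu, by simp⟩
  | succ D ih =>
    intro u hu
    rw [pow_succ, ← mul_assoc] at hu
    nth_rw 2 [Ideal.span_insert] at hu
    rw [Ideal.mul_sup] at hu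
    obtain ⟨p, hp, q, hq, rfl⟩ := Submodule.mem_sup.mp hu
    obtain ⟨p, hp', rfl⟩ := Ideal.mem_mul_span_singleton.mp hp
    obtain ⟨q, hq', rfl⟩ := Ideal.mem_mul_span_singleton.mp hq
    obtain ⟨r, hr, rfl⟩ := ih hp'
    obtain ⟨s, hs, rfl⟩ := ih hq'
    refine ⟨fun i => (if i = 0 then 0 else r (i - 1)) + if i ≤ D then s i else 0, fun i => ?_, ?_⟩
    · refine add_mem ?_ ?_ <;> split_ifs <;> simp [hr, hs]
    · simp only [add_mul, Finset.sum_add_distrib]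
      congr 1
      · rw [Finset.sum_range_succ' _ (D + 1), Finset.sum_mul]
        simp only [Nat.add_eq_zero_iff, one_ne_zero, and_false, if_false, if_true, zero_mul,
          add_zero, Nat.add_sub_cancel, Nat.add_sub_add_right]
        exact Finset.sum_congr rfl fun i _ => by ring
      · rw [Finset.sum_range_succ _ (D + 1), if_neg (by omega), zero_mul, add_zero, Finset.sum_mul]
        refine Finset.sum_congr rfl fun i hi => ?_
        have hi' : i ≤ D := Nat.lt_succ_iff.mp (Finset.mem_range.mp hi)
        rw [if_pos hi', Nat.succ_sub hi', pow_succ]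
        ring

lemma Ideal.sup_pow_succ_le (A B : Ideal R) (D : ℕ) :
    (A ⊔ B) ^ (D + 1) ≤ A * (A ⊔ B) ^ D ⊔ B ^ (D + 1) := by
  induction D with
  | zero => simp
  | succ D ih =>
    rw [pow_succ' (A ⊔ B) (D + 1), Ideal.sup_mul]
    refine sup_le le_sup_left ?_
    refine (Ideal.mul_mono_right ih).trans ?_
    rw [Ideal.mul_sup, ← pow_succ']
    refine sup_le_sup_right ?_ _
    rw [mul_left_comm, pow_succ' (A ⊔ B)]
    exact Ideal.mul_mono_right (Ideal.mul_mono_left le_sup_right)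

namespace IsRegularTriple

variable {x y z : R}

lemma mem_of_y_pow_mul (h : IsRegularTriple x y z) (n : ℕ) {u : R}
    (hu : y ^ n * u ∈ Ideal.span {x}) : u ∈ Ideal.span {x} := by
  induction n with
  | zero => simpa using hu
  | succ n ih => exact ih (h.mem_of_y_mul _ (by rwa [← mul_assoc, ← pow_succ']))

lemma mem_of_z_pow_mul (h : IsRegularTriple x y z) (n : ℕ) {u : R}
    (hu : z ^ n * u ∈ Ideal.span {x, y}) : u ∈ Ideal.span {x, y} := by
  induction n with
  | zero => simpa using hu
  | succ n ih => exact ih (h.mem_of_z_mul _ (by rwa [← mul_assoc, ← pow_succ']))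

lemma span_pair_le : Ideal.span {x, y} ≤ Ideal.span {x, y, z} :=
  Ideal.span_mono (by rintro _ (rfl | rfl) <;> simp)

lemma x_mem : x ∈ Ideal.span {x, y, z} := Ideal.subset_span (by simp)
lemma y_mem : y ∈ Ideal.span {x, y, z} := Ideal.subset_span (by simp)
lemma z_mem : z ∈ Ideal.span {x, y, z} := Ideal.subset_span (by simp)

/-- A binary form in `y`, `z` that vanishes modulo `x` has all its coefficients in `(x, y, z)`,
and its value lies in `x (x, y, z) ^ D`. -/
lemma coeff_mem_of_sum_mem (h : IsRegularTriple x y z) (D : ℕ) : ∀ (r : ℕ → R),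
    ∑ i ∈ Finset.range (D + 1), r i * (y ^ i * z ^ (D - i)) ∈ Ideal.span {x} →
    (∀ i ≤ D, r i ∈ Ideal.span {x, y, z}) ∧
    ∑ i ∈ Finset.range (D + 1), r i * (y ^ i * z ^ (D - i)) ∈
      Ideal.span {x} * Ideal.span {x, y, z} ^ D := by
  induction D with
  | zero =>
    intro r hr
    refine ⟨fun i hi => ?_, by simpa using hr⟩
    obtain rfl : i = 0 := by omega
    exact Ideal.span_mono (by simp) (show r 0 ∈ Ideal.span {x} by simpa using hr)
  | succ D ih =>
    intro r hr
    have hsplit : ∑ i ∈ Finset.range (D + 1 + 1), r i * (y ^ i * z ^ (D + 1 - i)) =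
        y * ∑ i ∈ Finset.range (D + 1), r (i + 1) * (y ^ i * z ^ (D - i)) +
          r 0 * z ^ (D + 1) := by
      rw [Finset.sum_range_succ', Finset.mul_sum]
      congr 1
      · exact Finset.sum_congr rfl fun i _ => by rw [Nat.add_sub_add_right]; ring
      · simp
    have hr0 : r 0 ∈ Ideal.span {x, y} := by
      refine h.mem_of_z_pow_mul (D + 1) ?_
      have h1 : r 0 * z ^ (D + 1) =
        ∑ i ∈ Finset.range (D + 1 + 1), r i * (y ^ i * z ^ (D + 1 - i)) -
          (∑ i ∈ Finset.range (D + 1), r (i + 1) * (y ^ i * z ^ (D - i))) * y := by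
        rw [hsplit]; ring
      rw [mul_comm, h1]
      exact sub_mem (Ideal.span_mono (by simp) hr)
        (Ideal.mul_mem_left _ _ (Ideal.subset_span (by simp)))
    obtain ⟨p, q, hpq⟩ := Ideal.mem_span_pair.mp hr0
    have hsum : ∑ i ∈ Finset.range (D + 1),
        (r (i + 1) + if i = 0 then q * z else 0) * (y ^ i * z ^ (D - i)) =
        ∑ i ∈ Finset.range (D + 1), r (i + 1) * (y ^ i * z ^ (D - i)) + q * z ^ (D + 1) := by
      simp only [add_mul, Finset.sum_add_distrib, ite_mul, zero_mul]
      rw [Finset.sum_ite_eq' (Finset.range (D + 1)) 0, if_pos (by simp)]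
      simp only [pow_zero, one_mul, Nat.sub_zero]
      ring
    have hsplit' : ∑ i ∈ Finset.range (D + 1 + 1), r i * (y ^ i * z ^ (D + 1 - i)) =
        y * ∑ i ∈ Finset.range (D + 1),
          (r (i + 1) + if i = 0 then q * z else 0) * (y ^ i * z ^ (D - i)) +
          x * (p * z ^ (D + 1)) := by
      rw [hsplit, hsum, ← hpq]; ring
    have hx : ∀ t, x * t ∈ Ideal.span {x} := fun t =>
      Ideal.mul_mem_right _ _ (Ideal.mem_span_singleton_self x)
    obtain ⟨ih1, ih2⟩ := ih (fun i => r (i + 1) + if i = 0 then q * z else 0) (by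
      refine h.mem_of_y_mul _ ?_
      rw [hsplit'] at hr
      exact (Ideal.add_mem_iff_left _ (hx _)).mp hr)
    refine ⟨fun i hi => ?_, ?_⟩
    · rcases i with _ | i
      · exact span_pair_le hr0
      · refine (Ideal.add_mem_iff_left _ ?_).mp (ih1 i (by omega))
        split_ifs
        · exact Ideal.mul_mem_left _ _ z_mem
        · exact zero_mem _
    · rw [hsplit']
      refine add_mem ?_ ?_
      · rw [pow_succ, ← mul_assoc, mul_comm y]
        exact Ideal.mul_mem_mul ih2 y_mem
      · exact Ideal.mul_mem_mul (Ideal.mem_span_singleton_self x)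
          (Ideal.mul_mem_left _ _ (Ideal.pow_mem_pow z_mem _))

/-- Multiplication by `x` shifts the `(x, y, z)`-adic order by exactly one. -/
lemma mem_pow_of_x_mul_mem (h : IsRegularTriple x y z) {d : ℕ} {u : R}
    (hu : x * u ∈ Ideal.span {x, y, z} ^ (d + 1)) : u ∈ Ideal.span {x, y, z} ^ d := by
  have hle := Ideal.sup_pow_succ_le (Ideal.span {x}) (Ideal.span {y, z}) d
  rw [← Ideal.span_insert] at hle
  obtain ⟨p, hp, q, hq, hpq⟩ := Submodule.mem_sup.mp (hle hu)
  obtain ⟨v, hv, rfl⟩ := Ideal.mem_span_singleton_mul.mp hp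
  obtain ⟨r, -, rfl⟩ := Ideal.exists_sum_of_mem_mul_span_pair_pow ⊤ y z (d + 1) (u := q)
    (by rwa [Ideal.top_mul])
  have hq2 := (h.coeff_mem_of_sum_mem (d + 1) r (by
    refine Ideal.mem_span_singleton'.mpr ⟨u - v, ?_⟩
    linear_combination -hpq)).2
  obtain ⟨w, hw, hxw⟩ := Ideal.mem_span_singleton_mul.mp hq2
  have huvw : u - (v + w) = 0 := h.eq_zero_of_mul _ (by linear_combination -hpq - hxw)
  rw [sub_eq_zero.mp huvw]
  exact add_mem hv (Ideal.pow_le_pow_right (Nat.le_succ d) hw)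

lemma mem_pow_of_x_pow_mul_mem (h : IsRegularTriple x y z) (k : ℕ) {d : ℕ} {u : R}
    (hu : x ^ k * u ∈ Ideal.span {x, y, z} ^ (d + k)) : u ∈ Ideal.span {x, y, z} ^ d := by
  induction k with
  | zero => simpa using hu
  | succ k ih => exact ih (h.mem_pow_of_x_mul_mem (by rwa [← mul_assoc, ← pow_succ', add_assoc]))

/-- A binary form of degree `D` in `y`, `z` that lies in `(x, y, z) ^ (D + 1)` modulo `x` has all
its coefficients in `(x, y, z)`. -/
lemma coeff_mem_of_sum_sub_mem (h : IsRegularTriple x y z) {D : ℕ} (r : ℕ → R) {w : R}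
    (hw : w ∈ Ideal.span {x, y, z} ^ (D + 1))
    (hr : ∑ i ∈ Finset.range (D + 1), r i * (y ^ i * z ^ (D - i)) - w ∈ Ideal.span {x}) :
    ∀ i ≤ D, r i ∈ Ideal.span {x, y, z} := by
  have hle := Ideal.sup_pow_succ_le (Ideal.span {x}) (Ideal.span {y, z}) D
  rw [← Ideal.span_insert] at hle
  obtain ⟨p, hp, q, hq, rfl⟩ := Submodule.mem_sup.mp (hle hw)
  rw [pow_succ'] at hq
  obtain ⟨s, hs, rfl⟩ := Ideal.exists_sum_of_mem_mul_span_pair_pow _ y z D hq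
  have key := (h.coeff_mem_of_sum_mem D (fun i => r i - s i) (by
    simp only [sub_mul, Finset.sum_sub_distrib]
    have hp' : p ∈ Ideal.span {x} := Ideal.mul_le_left hp
    have hsum := add_mem hr hp'
    rwa [add_comm p, sub_add_eq_sub_sub, sub_add_cancel] at hsum)).1
  intro i hi
  refine (Submodule.sub_mem_iff_left _ ?_).mp (key i hi)
  exact Ideal.span_mono (by simp) (hs i)

end IsRegularTriple

end RegularTriple

/-- The maximal minors `a`, `b`, `c` of the matrix with rows `x, y, z` and `y, z, x ^ 2`, together
with the additional generator `δ` of the saturation of `(a, b, c) ^ 2`. -/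
structure IsMinorSystem {R : Type*} [CommRing R] (x y z a b c δ : R) : Prop extends
    IsRegularTriple x y z where
  a_eq : a = z ^ 2 - x ^ 2 * y
  b_eq : b = x ^ 3 - y * z
  c_eq : c = y ^ 2 - x * z
  δ_eq : δ = x ^ 5 - 3 * x ^ 2 * y * z + z ^ 3 + x * y ^ 3

section MinorSystem

variable {R : Type*} [CommRing R]

/-- The ideals generated in degree `n` by `a, b, c` in degree one and `δ` in degree two. -/
def symbolicIdeal (a b c δ : R) : ℕ → Ideal R
  | 0 => ⊤
  | 1 => Ideal.span {a, b, c}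
  | n + 2 => Ideal.span {a, b, c} * symbolicIdeal a b c δ (n + 1) ⊔
      Ideal.span {δ} * symbolicIdeal a b c δ n

/-- The monomial `δ ^ (n / 2) * a ^ (n % 2)`. -/
def evenForm (a δ : R) : ℕ → R
  | 0 => 1
  | 1 => a
  | n + 2 => δ * evenForm a δ n

/-- The monomial of degree `n` among `b * δ ^ i` and `a * b * δ ^ i`. -/
def oddForm (a b δ : R) : ℕ → R
  | 0 => 0
  | 1 => b
  | 2 => a * b
  | n + 3 => δ * oddForm a b δ (n + 1)

section symbolicIdeal

variable {a b c δ : R}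

lemma mul_mem_symbolicIdeal {n : ℕ} {i u : R} (hi : i ∈ Ideal.span {a, b, c})
    (hu : u ∈ symbolicIdeal a b c δ n) : i * u ∈ symbolicIdeal a b c δ (n + 1) := by
  cases n with
  | zero => exact Ideal.mul_mem_right _ _ hi
  | succ n => exact Ideal.mem_sup_left (Ideal.mul_mem_mul hi hu)

lemma δ_mul_mem_symbolicIdeal {n : ℕ} {u : R} (hu : u ∈ symbolicIdeal a b c δ n) :
    δ * u ∈ symbolicIdeal a b c δ (n + 2) :=
  Ideal.mem_sup_right (Ideal.mul_mem_mul (Ideal.mem_span_singleton_self δ) hu)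

lemma a_mul_mem_symbolicIdeal {n : ℕ} {u : R} (hu : u ∈ symbolicIdeal a b c δ n) :
    a * u ∈ symbolicIdeal a b c δ (n + 1) :=
  mul_mem_symbolicIdeal (Ideal.subset_span (by simp)) hu

lemma b_mul_mem_symbolicIdeal {n : ℕ} {u : R} (hu : u ∈ symbolicIdeal a b c δ n) :
    b * u ∈ symbolicIdeal a b c δ (n + 1) :=
  mul_mem_symbolicIdeal (Ideal.subset_span (by simp)) hu

lemma c_mul_mem_symbolicIdeal {n : ℕ} {u : R} (hu : u ∈ symbolicIdeal a b c δ n) :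
    c * u ∈ symbolicIdeal a b c δ (n + 1) :=
  mul_mem_symbolicIdeal (Ideal.subset_span (by simp)) hu

lemma a_mem_symbolicIdeal : a ∈ symbolicIdeal a b c δ 1 := Ideal.subset_span (by simp)
lemma b_mem_symbolicIdeal : b ∈ symbolicIdeal a b c δ 1 := Ideal.subset_span (by simp)
lemma c_mem_symbolicIdeal : c ∈ symbolicIdeal a b c δ 1 := Ideal.subset_span (by simp)

lemma δ_mem_symbolicIdeal : δ ∈ symbolicIdeal a b c δ 2 := by
  simpa using δ_mul_mem_symbolicIdeal (n := 0) (a := a) (b := b) (c := c) (δ := δ) (u := 1) trivial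

lemma evenForm_mem (a b c δ : R) (n : ℕ) : evenForm a δ n ∈ symbolicIdeal a b c δ n := by
  induction n using Nat.twoStepInduction with
  | zero => trivial
  | one => exact a_mem_symbolicIdeal
  | more n ih _ => exact δ_mul_mem_symbolicIdeal ih

lemma oddForm_succ_mem (a b c δ : R) (n : ℕ) :
    oddForm a b δ (n + 1) ∈ symbolicIdeal a b c δ (n + 1) := by
  induction n using Nat.twoStepInduction with
  | zero => exact b_mem_symbolicIdeal
  | one => exact a_mul_mem_symbolicIdeal b_mem_symbolicIdeal
  | more n ih _ => exact δ_mul_mem_symbolicIdeal ih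

end symbolicIdeal

/-- Elements of the shape `c v + r P + s Q + x w` that describe `symbolicIdeal` in degree
`n + 1`. -/
def normalFormIdeal (x a b c δ : R) (n : ℕ) : Ideal R :=
  Ideal.span {c} * symbolicIdeal a b c δ n ⊔
    (Ideal.span {evenForm a δ (n + 1), oddForm a b δ (n + 1)} ⊔
      Ideal.span {x} * symbolicIdeal a b c δ (n + 1))

section normalFormIdeal

variable {x a b c δ : R}

lemma mem_normalFormIdeal_iff {n : ℕ} {u : R} :
    u ∈ normalFormIdeal x a b c δ n ↔
      ∃ v ∈ symbolicIdeal a b c δ n, ∃ w ∈ symbolicIdeal a b c δ (n + 1), ∃ r s : R,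
        u = c * v + r * evenForm a δ (n + 1) + s * oddForm a b δ (n + 1) + x * w := by
  simp only [normalFormIdeal, Submodule.mem_sup, Ideal.mem_span_singleton_mul, Ideal.mem_span_pair]
  constructor
  · rintro ⟨_, ⟨v, hv, rfl⟩, _, ⟨_, ⟨r, s, rfl⟩, _, ⟨w, hw, rfl⟩, rfl⟩, rfl⟩
    exact ⟨v, hv, w, hw, r, s, by ring⟩
  · rintro ⟨v, hv, w, hw, r, s, rfl⟩
    exact ⟨_, ⟨v, hv, rfl⟩, _, ⟨_, ⟨r, s, rfl⟩, _, ⟨w, hw, rfl⟩, rfl⟩, by ring⟩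

lemma c_mul_mem_normalFormIdeal {n : ℕ} {v : R} (hv : v ∈ symbolicIdeal a b c δ n) :
    c * v ∈ normalFormIdeal x a b c δ n :=
  mem_normalFormIdeal_iff.mpr ⟨v, hv, 0, zero_mem _, 0, 0, by ring⟩

lemma x_mul_mem_normalFormIdeal {n : ℕ} {w : R} (hw : w ∈ symbolicIdeal a b c δ (n + 1)) :
    x * w ∈ normalFormIdeal x a b c δ n :=
  mem_normalFormIdeal_iff.mpr ⟨0, zero_mem _, w, hw, 0, 0, by ring⟩

lemma evenForm_mem_normalFormIdeal {n : ℕ} :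
    evenForm a δ (n + 1) ∈ normalFormIdeal x a b c δ n :=
  mem_normalFormIdeal_iff.mpr ⟨0, zero_mem _, 0, zero_mem _, 1, 0, by ring⟩

lemma oddForm_mem_normalFormIdeal {n : ℕ} :
    oddForm a b δ (n + 1) ∈ normalFormIdeal x a b c δ n :=
  mem_normalFormIdeal_iff.mpr ⟨0, zero_mem _, 0, zero_mem _, 0, 1, by ring⟩

lemma δ_mul_mem_normalFormIdeal {n : ℕ} {u : R} (hu : u ∈ normalFormIdeal x a b c δ n) :
    δ * u ∈ normalFormIdeal x a b c δ (n + 2) := by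
  obtain ⟨v, hv, w, hw, r, s, rfl⟩ := mem_normalFormIdeal_iff.mp hu
  refine mem_normalFormIdeal_iff.mpr ⟨δ * v, δ_mul_mem_symbolicIdeal hv, δ * w,
    δ_mul_mem_symbolicIdeal hw, r, s, ?_⟩
  simp only [evenForm, oddForm]
  ring

end normalFormIdeal

namespace IsMinorSystem

variable {x y z a b c δ : R}

lemma z_mul_δ (h : IsMinorSystem x y z a b c δ) : z * δ = a ^ 2 - x * b * c := by
  rw [h.a_eq, h.b_eq, h.c_eq, h.δ_eq]; ring

lemma y_mul_δ (h : IsMinorSystem x y z a b c δ) : y * δ = x * c ^ 2 - a * b := by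
  rw [h.a_eq, h.b_eq, h.c_eq, h.δ_eq]; ring

lemma x_mul_δ (h : IsMinorSystem x y z a b c δ) : x * δ = b ^ 2 - a * c := by
  rw [h.a_eq, h.b_eq, h.c_eq, h.δ_eq]; ring

lemma y_mul_a (h : IsMinorSystem x y z a b c δ) : y * a = -(z * b) - x ^ 2 * c := by
  rw [h.a_eq, h.b_eq, h.c_eq]; ring

lemma y_mul_b (h : IsMinorSystem x y z a b c δ) : y * b = -(z * c) - x * a := by
  rw [h.a_eq, h.b_eq, h.c_eq]; ring

lemma a_mul_evenForm_mem (h : IsMinorSystem x y z a b c δ) (n : ℕ) :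
    a * evenForm a δ (n + 1) ∈ normalFormIdeal x a b c δ (n + 1) := by
  induction n using Nat.twoStepInduction with
  | zero =>
    refine mem_normalFormIdeal_iff.mpr ⟨0, zero_mem _, b * c,
      b_mul_mem_symbolicIdeal c_mem_symbolicIdeal, z, 0, ?_⟩
    simp only [evenForm]
    linear_combination -h.z_mul_δ
  | one =>
    have := evenForm_mem_normalFormIdeal (x := x) (a := a) (b := b) (c := c) (δ := δ) (n := 2)
    simpa only [evenForm, mul_one, mul_comm a] using this
  | more n ih _ =>
    have := δ_mul_mem_normalFormIdeal ih
    rwa [mul_left_comm] at this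

lemma a_mul_oddForm_mem (h : IsMinorSystem x y z a b c δ) (n : ℕ) :
    a * oddForm a b δ (n + 1) ∈ normalFormIdeal x a b c δ (n + 1) := by
  induction n using Nat.twoStepInduction with
  | zero => exact oddForm_mem_normalFormIdeal
  | one =>
    refine mem_normalFormIdeal_iff.mpr ⟨0, zero_mem _, b * (b * c), b_mul_mem_symbolicIdeal
      (b_mul_mem_symbolicIdeal c_mem_symbolicIdeal), 0, z, ?_⟩
    simp only [oddForm]
    linear_combination -b * h.z_mul_δ
  | more n ih _ =>
    have := δ_mul_mem_normalFormIdeal ih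
    rwa [mul_left_comm] at this

lemma b_mul_evenForm_mem (x a b c δ : R) (n : ℕ) :
    b * evenForm a δ (n + 1) ∈ normalFormIdeal x a b c δ (n + 1) := by
  induction n using Nat.twoStepInduction with
  | zero =>
    rw [mul_comm]
    exact oddForm_mem_normalFormIdeal
  | one =>
    have := oddForm_mem_normalFormIdeal (x := x) (a := a) (b := b) (c := c) (δ := δ) (n := 2)
    simpa only [evenForm, oddForm, mul_one, mul_comm b] using this
  | more n ih _ =>
    have := δ_mul_mem_normalFormIdeal ih
    rwa [mul_left_comm] at this

lemma b_mul_oddForm_mem (h : IsMinorSystem x y z a b c δ) (n : ℕ) :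
    b * oddForm a b δ (n + 1) ∈ normalFormIdeal x a b c δ (n + 1) := by
  induction n using Nat.twoStepInduction with
  | zero =>
    refine mem_normalFormIdeal_iff.mpr ⟨a, a_mem_symbolicIdeal, δ, δ_mem_symbolicIdeal, 0, 0, ?_⟩
    simp only [oddForm]
    linear_combination -h.x_mul_δ
  | one =>
    refine mem_normalFormIdeal_iff.mpr ⟨a * a, a_mul_mem_symbolicIdeal a_mem_symbolicIdeal,
      a * δ, a_mul_mem_symbolicIdeal δ_mem_symbolicIdeal, 0, 0, ?_⟩
    simp only [oddForm]
    linear_combination -a * h.x_mul_δ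
  | more n ih _ =>
    have := δ_mul_mem_normalFormIdeal ih
    rwa [mul_left_comm] at this

lemma mul_mem_normalFormIdeal (h : IsMinorSystem x y z a b c δ) {n : ℕ} {i u : R}
    (hi : i ∈ Ideal.span {a, b, c}) (hu : u ∈ symbolicIdeal a b c δ (n + 1))
    (hu' : u ∈ normalFormIdeal x a b c δ n) : i * u ∈ normalFormIdeal x a b c δ (n + 1) := by
  have ha : a * u ∈ normalFormIdeal x a b c δ (n + 1) := by
    obtain ⟨v, hv, w, hw, r, s, rfl⟩ := mem_normalFormIdeal_iff.mp hu'
    have := add_mem (add_mem (add_mem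
      (c_mul_mem_normalFormIdeal (x := x) (a_mul_mem_symbolicIdeal hv))
      (Ideal.mul_mem_left _ r (h.a_mul_evenForm_mem n)))
      (Ideal.mul_mem_left _ s (h.a_mul_oddForm_mem n)))
      (x_mul_mem_normalFormIdeal (x := x) (a_mul_mem_symbolicIdeal hw))
    convert this using 1
    ring
  have hb : b * u ∈ normalFormIdeal x a b c δ (n + 1) := by
    obtain ⟨v, hv, w, hw, r, s, rfl⟩ := mem_normalFormIdeal_iff.mp hu'
    have := add_mem (add_mem (add_mem
      (c_mul_mem_normalFormIdeal (x := x) (b_mul_mem_symbolicIdeal hv))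
      (Ideal.mul_mem_left _ r (b_mul_evenForm_mem x a b c δ n)))
      (Ideal.mul_mem_left _ s (h.b_mul_oddForm_mem n)))
      (x_mul_mem_normalFormIdeal (x := x) (b_mul_mem_symbolicIdeal hw))
    convert this using 1
    ring
  obtain ⟨p, q, r, rfl⟩ := Submodule.mem_span_triple.mp hi
  simp only [smul_eq_mul, add_mul, mul_assoc]
  exact add_mem (add_mem (Ideal.mul_mem_left _ _ ha) (Ideal.mul_mem_left _ _ hb))
    (Ideal.mul_mem_left _ _ (c_mul_mem_normalFormIdeal hu))

lemma symbolicIdeal_succ_le (h : IsMinorSystem x y z a b c δ) (n : ℕ) :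
    symbolicIdeal a b c δ (n + 1) ≤ normalFormIdeal x a b c δ n := by
  induction n using Nat.strong_induction_on with
  | _ n ih =>
    rcases n with _ | n
    · intro u hu
      obtain ⟨p, q, r, rfl⟩ := Submodule.mem_span_triple.mp hu
      refine mem_normalFormIdeal_iff.mpr ⟨r, trivial, 0, zero_mem _, p, q, ?_⟩
      simp only [evenForm, oddForm, smul_eq_mul]
      ring
    · refine sup_le (Ideal.mul_le.mpr fun i hi u hu =>
        h.mul_mem_normalFormIdeal hi hu (ih n n.lt_succ_self hu)) ?_
      refine Ideal.mul_le.mpr fun i hi u hu => ?_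
      obtain ⟨p, rfl⟩ := Ideal.mem_span_singleton'.mp hi
      rw [mul_assoc]
      refine Ideal.mul_mem_left _ _ ?_
      rcases n with _ | n
      · have := evenForm_mem_normalFormIdeal (x := x) (a := a) (b := b) (c := c) (δ := δ) (n := 1)
        simp only [evenForm, mul_one] at this
        exact Ideal.mul_mem_right _ _ this
      · exact δ_mul_mem_normalFormIdeal (ih n (by omega) hu)

lemma δ_sub_mem (h : IsMinorSystem x y z a b c δ) : δ - z ^ 3 ∈ Ideal.span {x} :=
  Ideal.mem_span_singleton'.mpr ⟨x ^ 4 - 3 * x * y * z + y ^ 3, by rw [h.δ_eq]; ring⟩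

lemma a_sub_mem (h : IsMinorSystem x y z a b c δ) : a - z ^ 2 ∈ Ideal.span {x} :=
  Ideal.mem_span_singleton'.mpr ⟨-(x * y), by rw [h.a_eq]; ring⟩

lemma b_add_mem (h : IsMinorSystem x y z a b c δ) : b + y * z ∈ Ideal.span {x} :=
  Ideal.mem_span_singleton'.mpr ⟨x ^ 2, by rw [h.b_eq]; ring⟩

lemma c_sub_mem (h : IsMinorSystem x y z a b c δ) : c - y ^ 2 ∈ Ideal.span {x} :=
  Ideal.mem_span_singleton'.mpr ⟨-z, by rw [h.c_eq]; ring⟩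

lemma evenForm_sub_mem (h : IsMinorSystem x y z a b c δ) (n : ℕ) :
    ∃ t : ℕ, evenForm a δ n - z ^ t ∈ Ideal.span {x} := by
  induction n using Nat.twoStepInduction with
  | zero => exact ⟨0, by simp [evenForm]⟩
  | one => exact ⟨2, h.a_sub_mem⟩
  | more n ih _ =>
    obtain ⟨t, ht⟩ := ih
    refine ⟨t + 3, ?_⟩
    have := add_mem (Ideal.mul_mem_left _ δ ht) (Ideal.mul_mem_left _ (z ^ t) h.δ_sub_mem)
    convert this using 1
    simp only [evenForm]
    ring

lemma oddForm_add_mem (h : IsMinorSystem x y z a b c δ) (n : ℕ) :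
    ∃ t : ℕ, oddForm a b δ (n + 1) + y * z ^ t ∈ Ideal.span {x} := by
  induction n using Nat.twoStepInduction with
  | zero => exact ⟨1, by simpa [oddForm] using h.b_add_mem⟩
  | one =>
    refine ⟨3, ?_⟩
    have := sub_mem (Ideal.mul_mem_left _ a h.b_add_mem)
      (Ideal.mul_mem_left _ (y * z) h.a_sub_mem)
    convert this using 1
    simp only [oddForm]
    ring
  | more n ih _ =>
    obtain ⟨t, ht⟩ := ih
    refine ⟨t + 3, ?_⟩
    have := sub_mem (Ideal.mul_mem_left _ δ ht) (Ideal.mul_mem_left _ (y * z ^ t) h.δ_sub_mem)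
    convert this using 1
    simp only [oddForm]
    ring

lemma y_mul_evenForm (h : IsMinorSystem x y z a b c δ) (n : ℕ) :
    ∃ s : R, ∃ w ∈ symbolicIdeal a b c δ (n + 1),
      y * evenForm a δ (n + 1) = s * oddForm a b δ (n + 1) + x * w := by
  induction n using Nat.twoStepInduction with
  | zero =>
    refine ⟨-z, -x * c, Ideal.mul_mem_left _ _ c_mem_symbolicIdeal, ?_⟩
    simp only [evenForm, oddForm]
    linear_combination h.y_mul_a
  | one =>
    refine ⟨-1, c * c, c_mul_mem_symbolicIdeal c_mem_symbolicIdeal, ?_⟩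
    simp only [evenForm, oddForm]
    linear_combination h.y_mul_δ
  | more n ih _ =>
    obtain ⟨s, w, hw, e⟩ := ih
    refine ⟨s, δ * w, δ_mul_mem_symbolicIdeal hw, ?_⟩
    simp only [evenForm, oddForm] at e ⊢
    linear_combination δ * e

lemma y_mul_oddForm (h : IsMinorSystem x y z a b c δ) (n : ℕ) :
    ∃ v ∈ symbolicIdeal a b c δ n, ∃ w ∈ symbolicIdeal a b c δ (n + 1),
      y * oddForm a b δ (n + 1) = c * v + x * w := by
  induction n using Nat.twoStepInduction with
  | zero =>
    refine ⟨-z, trivial, -a, neg_mem a_mem_symbolicIdeal, ?_⟩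
    simp only [oddForm]
    linear_combination h.y_mul_b
  | one =>
    refine ⟨-z * a, Ideal.mul_mem_left _ _ a_mem_symbolicIdeal, -(a * a),
      neg_mem (a_mul_mem_symbolicIdeal a_mem_symbolicIdeal), ?_⟩
    simp only [oddForm]
    linear_combination a * h.y_mul_b
  | more n ih _ =>
    obtain ⟨v, hv, w, hw, e⟩ := ih
    refine ⟨δ * v, δ_mul_mem_symbolicIdeal hv, δ * w, δ_mul_mem_symbolicIdeal hw, ?_⟩
    simp only [oddForm] at e ⊢
    linear_combination δ * e

/-- `x` is a nonzerodivisor modulo each `symbolicIdeal`. -/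
lemma mem_symbolicIdeal_of_x_mul_mem (h : IsMinorSystem x y z a b c δ) (n : ℕ) : ∀ {u : R},
    x * u ∈ symbolicIdeal a b c δ n → u ∈ symbolicIdeal a b c δ n := by
  induction n with
  | zero => exact fun _ => trivial
  | succ n ih =>
    intro u hu
    obtain ⟨v, hv, w, hw, r, s, e⟩ := mem_normalFormIdeal_iff.mp (h.symbolicIdeal_succ_le n hu)
    obtain ⟨tP, htP⟩ := h.evenForm_sub_mem (n + 1)
    obtain ⟨tQ, htQ⟩ := h.oddForm_add_mem n
    obtain ⟨p, hp⟩ := Ideal.mem_span_singleton'.mp htP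
    obtain ⟨q, hq⟩ := Ideal.mem_span_singleton'.mp htQ
    obtain ⟨c', hc'⟩ := Ideal.mem_span_singleton'.mp h.c_sub_mem
    obtain ⟨α, β, rfl⟩ := Ideal.mem_span_pair.mp (h.mem_of_z_pow_mul tP (u := r)
      (Ideal.mem_span_pair.mpr ⟨u - w - c' * v - s * q - r * p, -(y * v) + s * z ^ tQ, by
        linear_combination e - r * hp - s * hq - v * hc'⟩))
    obtain ⟨s', w', hw', e'⟩ := h.y_mul_evenForm n
    obtain ⟨v', hv', w'', hw'', e''⟩ := h.y_mul_oddForm n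
    have hyv : y * v - (s + β * s') * z ^ tQ ∈ Ideal.span {x} := by
      refine h.mem_of_y_mul _ (Ideal.mem_span_singleton'.mpr ⟨u - w - c' * v -
        α * evenForm a δ (n + 1) - β * w' - (s + β * s') * q, ?_⟩)
      linear_combination e - v * hc' - (s + β * s') * hq + β * e'
    obtain ⟨g, hg⟩ := Ideal.mem_span_singleton'.mp hyv
    obtain ⟨α', β', hs⟩ := Ideal.mem_span_pair.mp (h.mem_of_z_pow_mul tQ (u := s + β * s')
      (Ideal.mem_span_pair.mpr ⟨-g, v, by linear_combination -hg⟩))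
    have hvv : v + β' * v' ∈ Ideal.span {x} := by
      refine h.mem_of_y_pow_mul 2 (Ideal.mem_span_singleton'.mpr ⟨u - w -
        α * evenForm a δ (n + 1) - β * w' - α' * oddForm a b δ (n + 1) - β' * w'' -
        c' * (v + β' * v'), ?_⟩)
      linear_combination e + β * e' - oddForm a b δ (n + 1) * hs + β' * e'' -
        (v + β' * v') * hc'
    obtain ⟨t, ht⟩ := Ideal.mem_span_singleton'.mp hvv
    have htn : t ∈ symbolicIdeal a b c δ n := by
      refine ih ?_
      rw [mul_comm, ht]
      exact add_mem hv (Ideal.mul_mem_left _ _ hv')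
    have hu' : u - (c * t + w + α * evenForm a δ (n + 1) + β * w' +
        α' * oddForm a b δ (n + 1) + β' * w'') = 0 := by
      refine h.eq_zero_of_mul _ ?_
      linear_combination e + β * e' - oddForm a b δ (n + 1) * hs + β' * e'' - c * ht
    rw [sub_eq_zero.mp hu']
    exact add_mem (add_mem (add_mem (add_mem (add_mem (c_mul_mem_symbolicIdeal htn) hw)
      (Ideal.mul_mem_left _ _ (evenForm_mem a b c δ _))) (Ideal.mul_mem_left _ _ hw'))
      (Ideal.mul_mem_left _ _ (oddForm_succ_mem a b c δ n))) (Ideal.mul_mem_left _ _ hw'')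

end IsMinorSystem

/-- The monomials of degree `d` in `a, b, c` that are at most linear in `b`, for `i ≤ 2 * d`. -/
def cornerMonomial (a b c : R) (d i : ℕ) : R :=
  a ^ ((2 * d - i) / 2) * b ^ (i % 2) * c ^ (i / 2)

/-- The power `(a, b, c) ^ (d - 2)`, or zero if `d < 2`. -/
def lowerPower (a b c : R) : ℕ → Ideal R
  | 0 => ⊥
  | 1 => ⊥
  | d + 2 => Ideal.span {a, b, c} ^ d

lemma mul_lowerPower_le (a b c : R) (d : ℕ) :
    Ideal.span {a, b, c} * lowerPower a b c d ≤ lowerPower a b c (d + 1) := by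
  match d with
  | 0 => simp [lowerPower]
  | 1 => simp [lowerPower]
  | d + 2 => exact (pow_succ' _ _).ge

lemma cornerMonomial_two_mul (a b c : R) (d j : ℕ) :
    cornerMonomial a b c d (2 * j) = a ^ (d - j) * c ^ j := by
  rw [cornerMonomial, ← Nat.mul_sub, Nat.mul_div_cancel_left _ two_pos,
    Nat.mul_div_cancel_left _ two_pos, Nat.mul_mod_right, pow_zero, mul_one]

lemma cornerMonomial_two_mul_add_one (a b c : R) (d j : ℕ) :
    cornerMonomial a b c d (2 * j + 1) = a ^ (d - j - 1) * b * c ^ j := by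
  rw [cornerMonomial, show (2 * d - (2 * j + 1)) / 2 = d - j - 1 by omega,
    show (2 * j + 1) % 2 = 1 by omega, show (2 * j + 1) / 2 = j by omega, pow_one]

lemma cornerMonomial_mem_pow {J : Ideal R} {a b c : R} (ha : a ∈ J) (hb : b ∈ J) (hc : c ∈ J)
    {d i : ℕ} (hi : i ≤ 2 * d) : cornerMonomial a b c d i ∈ J ^ d := by
  have := Ideal.mul_mem_mul (Ideal.mul_mem_mul (Ideal.pow_mem_pow ha ((2 * d - i) / 2))
    (Ideal.pow_mem_pow hb (i % 2))) (Ideal.pow_mem_pow hc (i / 2))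
  rwa [← pow_add, ← pow_add, show (2 * d - i) / 2 + i % 2 + i / 2 = d by omega] at this

namespace IsMinorSystem

variable {x y z a b c δ : R}

/-- Modulo the multiples of `x * δ = b ^ 2 - a * c`, powers of `(a, b, c)` are spanned by the
monomials that are at most linear in `b`. -/
lemma pow_le (h : IsMinorSystem x y z a b c δ) (d : ℕ) :
    Ideal.span {a, b, c} ^ d ≤
      Ideal.span (Set.range fun i : Fin (2 * d + 1) => cornerMonomial a b c d i) ⊔
        Ideal.span {x * δ} * lowerPower a b c d := by
  induction d with
  | zero =>
    refine le_sup_of_le_left ?_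
    rw [pow_zero, Ideal.one_eq_top, top_le_iff, Ideal.eq_top_iff_one]
    exact Ideal.subset_span ⟨0, by simp [cornerMonomial]⟩
  | succ d ih =>
    rw [pow_succ']
    refine (Ideal.mul_mono_right ih).trans ?_
    rw [Ideal.mul_sup, mul_left_comm]
    refine sup_le ?_ (le_sup_of_le_right (Ideal.mul_mono_right (mul_lowerPower_le a b c d)))
    rw [Ideal.span_mul_span', Ideal.span_le, Set.mul_subset_iff]
    have key : ∀ i ≤ 2 * (d + 1), cornerMonomial a b c (d + 1) i ∈
        Ideal.span (Set.range fun i : Fin (2 * (d + 1) + 1) =>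
          cornerMonomial a b c (d + 1) i) ⊔ Ideal.span {x * δ} * lowerPower a b c (d + 1) :=
      fun i hi => Ideal.mem_sup_left (Ideal.subset_span ⟨⟨i, by omega⟩, rfl⟩)
    rintro s hs _ ⟨⟨i, hi⟩, rfl⟩
    obtain ⟨j, rfl | rfl⟩ := Nat.even_or_odd' i
    · have hj : d + 1 - j = d - j + 1 := by omega
      simp only [SetLike.mem_coe, cornerMonomial_two_mul]
      rcases hs with rfl | rfl | rfl
      · convert key (2 * j) (by omega) using 1
        rw [cornerMonomial_two_mul, hj]
        ring
      · convert key (2 * j + 1) (by omega) using 1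
        rw [cornerMonomial_two_mul_add_one, hj, Nat.add_sub_cancel]
        ring
      · convert key (2 * (j + 1)) (by omega) using 1
        rw [cornerMonomial_two_mul, Nat.add_sub_add_right]
        ring
    · obtain ⟨e, rfl⟩ : ∃ e, d = j + 1 + e := ⟨d - j - 1, by omega⟩
      simp only [SetLike.mem_coe, cornerMonomial_two_mul_add_one]
      rw [show j + 1 + e - j - 1 = e by omega]
      rcases hs with rfl | rfl | rfl
      · convert key (2 * j + 1) (by omega) using 1
        rw [cornerMonomial_two_mul_add_one, show j + 1 + e + 1 - j - 1 = e + 1 by omega]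
        ring
      · have h1 := key (2 * (j + 1)) (by omega)
        have h2 : x * δ * (a ^ e * c ^ j) ∈
            Ideal.span {x * δ} * lowerPower a s c (j + 1 + e + 1) := by
          refine Ideal.mul_mem_mul (Ideal.mem_span_singleton_self _) ?_
          have := Ideal.mul_mem_mul
            (Ideal.pow_mem_pow (Ideal.subset_span (by simp) : a ∈ Ideal.span {a, s, c}) e)
            (Ideal.pow_mem_pow (Ideal.subset_span (by simp) : c ∈ Ideal.span {a, s, c}) j)
          rw [← pow_add, add_comm e] at this
          rw [show j + 1 + e + 1 = j + e + 2 by omega]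
          exact this
        convert add_mem h1 (Ideal.mem_sup_right h2) using 1
        rw [cornerMonomial_two_mul, show j + 1 + e + 1 - (j + 1) = e + 1 by omega]
        linear_combination -(a ^ e * c ^ j) * h.x_mul_δ
      · convert key (2 * (j + 1) + 1) (by omega) using 1
        rw [cornerMonomial_two_mul_add_one, show j + 1 + e + 1 - (j + 1) - 1 = e by omega]
        ring

lemma a_mem (h : IsMinorSystem x y z a b c δ) : a ∈ Ideal.span {x, y, z} ^ 2 := by
  rw [h.a_eq, pow_two, pow_two, pow_two, mul_assoc]
  exact sub_mem (Ideal.mul_mem_mul IsRegularTriple.z_mem IsRegularTriple.z_mem)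
    (Ideal.mul_mem_mul IsRegularTriple.x_mem (Ideal.mul_mem_left _ _ IsRegularTriple.y_mem))

lemma b_mem (h : IsMinorSystem x y z a b c δ) : b ∈ Ideal.span {x, y, z} ^ 2 := by
  rw [h.b_eq, pow_succ' x, pow_two, pow_two]
  exact sub_mem (Ideal.mul_mem_mul IsRegularTriple.x_mem
    (Ideal.mul_mem_left _ _ IsRegularTriple.x_mem))
    (Ideal.mul_mem_mul IsRegularTriple.y_mem IsRegularTriple.z_mem)

lemma c_mem (h : IsMinorSystem x y z a b c δ) : c ∈ Ideal.span {x, y, z} ^ 2 := by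
  rw [h.c_eq, pow_two, pow_two]
  exact sub_mem (Ideal.mul_mem_mul IsRegularTriple.y_mem IsRegularTriple.y_mem)
    (Ideal.mul_mem_mul IsRegularTriple.x_mem IsRegularTriple.z_mem)

lemma span_le (h : IsMinorSystem x y z a b c δ) :
    Ideal.span {a, b, c} ≤ Ideal.span {x, y, z} ^ 2 := by
  rw [Ideal.span_le]
  rintro _ (rfl | rfl | rfl)
  exacts [h.a_mem, h.b_mem, h.c_mem]

lemma δ_mem (h : IsMinorSystem x y z a b c δ) : δ ∈ Ideal.span {x, y, z} ^ 3 := by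
  have hx := IsRegularTriple.x_mem (x := x) (y := y) (z := z)
  have hy := IsRegularTriple.y_mem (x := x) (y := y) (z := z)
  have hz := IsRegularTriple.z_mem (x := x) (y := y) (z := z)
  have h3 : ∀ {p q r : R}, p ∈ Ideal.span {x, y, z} → q ∈ Ideal.span {x, y, z} →
      r ∈ Ideal.span {x, y, z} → p * q * r ∈ Ideal.span {x, y, z} ^ 3 := fun hp hq hr => by
    rw [pow_succ, pow_two]
    exact Ideal.mul_mem_mul (Ideal.mul_mem_mul hp hq) hr
  have := add_mem (add_mem (add_mem (Ideal.mul_mem_left _ (x ^ 2) (h3 hx hx hx))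
    (Ideal.mul_mem_left _ (-3 * x) (h3 hx hy hz))) (h3 hz hz hz))
    (Ideal.mul_mem_left _ y (h3 hx hy hy))
  convert this using 1
  rw [h.δ_eq]
  ring

lemma δ_pow_mul_cornerMonomial_sub_mem (h : IsMinorSystem x y z a b c δ) (l : ℕ) {d i : ℕ}
    (hi : i ≤ 2 * d) :
    (-1) ^ i * (y ^ i * z ^ (2 * d + 3 * l - i)) - δ ^ l * cornerMonomial a b c d i ∈
      Ideal.span {x} := by
  have ha := Ideal.Quotient.mk_eq_mk_iff_sub_mem _ _ |>.mpr h.a_sub_mem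
  have hb : Ideal.Quotient.mk (Ideal.span {x}) b = Ideal.Quotient.mk (Ideal.span {x}) (-(y * z)) :=
    Ideal.Quotient.mk_eq_mk_iff_sub_mem _ _ |>.mpr (by simpa using h.b_add_mem)
  have hc := Ideal.Quotient.mk_eq_mk_iff_sub_mem _ _ |>.mpr h.c_sub_mem
  have hδ := Ideal.Quotient.mk_eq_mk_iff_sub_mem _ _ |>.mpr h.δ_sub_mem
  rw [← Ideal.Quotient.mk_eq_mk_iff_sub_mem, cornerMonomial]
  simp only [map_mul, map_pow, ha, hb, hc, hδ, map_neg, map_one]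
  obtain ⟨j, rfl | rfl⟩ := Nat.even_or_odd' i
  · obtain ⟨e, rfl⟩ : ∃ e, d = j + e := ⟨d - j, by omega⟩
    rw [show 2 * (j + e) + 3 * l - 2 * j = 2 * e + 3 * l by omega,
      show (2 * (j + e) - 2 * j) / 2 = e by omega, Nat.mul_mod_right,
      Nat.mul_div_cancel_left _ two_pos]
    simp only [pow_mul, pow_add, neg_one_sq, one_pow]
    ring
  · obtain ⟨e, rfl⟩ : ∃ e, d = j + 1 + e := ⟨d - j - 1, by omega⟩
    rw [show 2 * (j + 1 + e) + 3 * l - (2 * j + 1) = 2 * e + 1 + 3 * l by omega,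
      show (2 * (j + 1 + e) - (2 * j + 1)) / 2 = e by omega,
      show (2 * j + 1) % 2 = 1 by omega, show (2 * j + 1) / 2 = j by omega]
    simp only [pow_mul, pow_add, neg_one_sq, one_pow]
    ring

lemma coeff_mem_of_δ_pow_mul_mem (h : IsMinorSystem x y z a b c δ) (d l : ℕ) (r : ℕ → R) (s : R)
    (hrs : δ ^ l * (∑ i ∈ Finset.range (2 * d + 1), r i * cornerMonomial a b c d i + x * δ * s) ∈
      Ideal.span {x, y, z} ^ (2 * d + 3 * l + 1)) :
    (∀ i ≤ 2 * d, r i ∈ Ideal.span {x, y, z}) ∧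
      δ ^ (l + 1) * s ∈ Ideal.span {x, y, z} ^ (2 * d + 3 * l) := by
  have hr : ∀ i ≤ 2 * d, r i ∈ Ideal.span {x, y, z} := by
    have := h.coeff_mem_of_sum_sub_mem
      (fun i => if i ≤ 2 * d then (-1) ^ i * r i else 0) hrs (by
        have hsub : Finset.range (2 * d + 1) ⊆ Finset.range (2 * d + 3 * l + 1) :=
          Finset.range_subset_range.mpr (by omega)
        rw [← Finset.sum_subset hsub fun i _ hi => by
          rw [if_neg (by simpa [Nat.lt_succ_iff] using hi), zero_mul], mul_add,
          ← sub_sub, Finset.mul_sum, ← Finset.sum_sub_distrib]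
        refine sub_mem (sum_mem fun i hi => ?_) (Ideal.mem_span_singleton'.mpr
          ⟨δ ^ l * δ * s, by ring⟩)
        have hi' : i ≤ 2 * d := Nat.lt_succ_iff.mp (Finset.mem_range.mp hi)
        rw [if_pos hi']
        convert Ideal.mul_mem_left _ (r i) (h.δ_pow_mul_cornerMonomial_sub_mem l hi') using 1
        ring)
    intro i hi
    have hi2 := this i (by omega)
    rw [if_pos hi] at hi2
    convert Ideal.mul_mem_left _ ((-1) ^ i) hi2 using 1
    rw [← mul_assoc, ← mul_pow, neg_one_mul, neg_neg, one_pow, one_mul]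
  refine ⟨hr, h.mem_pow_of_x_mul_mem ?_⟩
  have hsum : δ ^ l * ∑ i ∈ Finset.range (2 * d + 1), r i * cornerMonomial a b c d i ∈
      Ideal.span {x, y, z} ^ (2 * d + 3 * l + 1) := by
    rw [show 2 * d + 3 * l + 1 = 3 * l + (1 + 2 * d) by ring, pow_add, pow_mul]
    refine Ideal.mul_mem_mul (Ideal.pow_mem_pow h.δ_mem l) (sum_mem fun i hi => ?_)
    have hi' : i ≤ 2 * d := Nat.lt_succ_iff.mp (Finset.mem_range.mp hi)
    rw [pow_add, pow_one, pow_mul]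
    exact Ideal.mul_mem_mul (hr i hi') (cornerMonomial_mem_pow h.a_mem h.b_mem h.c_mem hi')
  convert sub_mem hrs hsum using 1
  ring

open scoped Pointwise in
/-- One step of the recursive construction of a minimal system of generators of
`(a, b, c) ^ d`. -/
lemma exists_generators_aux (h : IsMinorSystem x y z a b c δ) (d : ℕ) {ι : Type} [Fintype ι]
    (v : ι → R) (hspan : lowerPower a b c d = Ideal.span (Set.range v))
    (hv : ∀ (l : ℕ) (r : ι → R), δ ^ (l + 1) * ∑ i, r i * v i ∈
      Ideal.span {x, y, z} ^ (2 * d + 3 * l) → ∀ i, r i ∈ Ideal.span {x, y, z}) :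
    ∃ v' : Fin (2 * d + 1) ⊕ ι → R, Ideal.span {a, b, c} ^ d = Ideal.span (Set.range v') ∧
      ∀ (l : ℕ) (r : Fin (2 * d + 1) ⊕ ι → R), δ ^ l * ∑ i, r i * v' i ∈
        Ideal.span {x, y, z} ^ (2 * d + 3 * l + 1) → ∀ i, r i ∈ Ideal.span {x, y, z} := by
  have ha : a ∈ Ideal.span {a, b, c} := Ideal.subset_span (by simp)
  have hb : b ∈ Ideal.span {a, b, c} := Ideal.subset_span (by simp)
  have hc : c ∈ Ideal.span {a, b, c} := Ideal.subset_span (by simp)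
  have hrange : Set.range (fun i => x * δ * v i) = ({x * δ} : Set R) * Set.range v := by
    rw [Set.singleton_mul, ← Set.range_comp]
    rfl
  refine ⟨Sum.elim (fun i => cornerMonomial a b c d i) (fun i => x * δ * v i),
    le_antisymm ?_ ?_, fun l r hr => ?_⟩
  · rw [Set.Sum.elim_range, Ideal.span_union, hrange, ← Ideal.span_mul_span', ← hspan]
    exact h.pow_le d
  · rw [Set.Sum.elim_range, Ideal.span_union, hrange, ← Ideal.span_mul_span', ← hspan]
    refine sup_le (Ideal.span_le.mpr ?_) ?_
    · rintro _ ⟨i, rfl⟩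
      exact cornerMonomial_mem_pow ha hb hc (by omega)
    · match d with
      | 0 => simp [lowerPower]
      | 1 => simp [lowerPower]
      | d + 2 =>
        rw [lowerPower, add_comm d, pow_add]
        refine Ideal.mul_mono_left ((Ideal.span_singleton_le_iff_mem _).mpr ?_)
        rw [h.x_mul_δ, pow_two, pow_two]
        exact sub_mem (Ideal.mul_mem_mul hb hb) (Ideal.mul_mem_mul ha hc)
  · let r' : ℕ → R := fun i => if hi : i < 2 * d + 1 then r (Sum.inl ⟨i, hi⟩) else 0
    have hr' : ∀ i : Fin (2 * d + 1), r' i = r (Sum.inl i) := fun i => dif_pos i.2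
    obtain ⟨h1, h2⟩ := h.coeff_mem_of_δ_pow_mul_mem d l r' (∑ i, r (Sum.inr i) * v i) (by
      convert hr using 2
      rw [Fintype.sum_sum_type, Finset.sum_range, Finset.mul_sum]
      congr 1
      · exact Finset.sum_congr rfl fun i _ => by rw [hr']; rfl
      · exact Finset.sum_congr rfl fun i _ => by simp only [Sum.elim_inr]; ring)
    rintro (i | i)
    · rw [← hr']
      exact h1 i (by omega)
    · exact hv l _ h2 i

/-- A minimal system of generators of `(a, b, c) ^ d`, whose initial forms are linearly
independent, even after multiplication by a power of `δ`. -/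
theorem exists_generators (h : IsMinorSystem x y z a b c δ) (d : ℕ) :
    ∃ (ι : Type) (_ : Fintype ι) (v : ι → R), Fintype.card ι = (d + 2).choose 2 ∧
      Ideal.span {a, b, c} ^ d = Ideal.span (Set.range v) ∧
      ∀ (l : ℕ) (r : ι → R), δ ^ l * ∑ i, r i * v i ∈
        Ideal.span {x, y, z} ^ (2 * d + 3 * l + 1) → ∀ i, r i ∈ Ideal.span {x, y, z} := by
  induction d using Nat.twoStepInduction with
  | zero =>
    obtain ⟨v, hv⟩ := h.exists_generators_aux 0 (Empty.elim : Empty → R)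
      (by simp [lowerPower, Set.range_eq_empty]) (fun _ _ _ => Empty.rec)
    exact ⟨_, inferInstance, v, by simp, hv⟩
  | one =>
    obtain ⟨v, hv⟩ := h.exists_generators_aux 1 (Empty.elim : Empty → R)
      (by simp [lowerPower, Set.range_eq_empty]) (fun _ _ _ => Empty.rec)
    exact ⟨_, inferInstance, v, by simp, hv⟩
  | more d ih _ =>
    obtain ⟨ι, _, v, hcard, hspan, hind⟩ := ih
    obtain ⟨v', hv'⟩ := h.exists_generators_aux (d + 2) v hspan
      (fun l r hr => hind (l + 1) r (by convert hr using 2; ring))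
    refine ⟨_, inferInstance, v', ?_, hv'⟩
    rw [Fintype.card_sum, Fintype.card_fin, hcard, Nat.choose_succ_succ' (d + 3) 1,
      Nat.choose_succ_succ' (d + 2) 1, Nat.choose_one_right, Nat.choose_one_right]
    ring

end IsMinorSystem

/-- The ideal `(a, b, c) ^ n + δ (a, b, c) ^ (n - 2) + ⋯ + δ ^ k (a, b, c) ^ (n - 2 * k)`. -/
def layerIdeal (a b c δ : R) (n : ℕ) : ℕ → Ideal R
  | 0 => Ideal.span {a, b, c} ^ n
  | k + 1 => layerIdeal a b c δ n k ⊔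
      Ideal.span {δ ^ (k + 1)} * Ideal.span {a, b, c} ^ (n - 2 * (k + 1))

lemma layerIdeal_mono (a b c δ : R) (n : ℕ) : Monotone (layerIdeal a b c δ n) :=
  monotone_nat_of_le_succ fun _ => le_sup_left

lemma δ_pow_mul_le_layerIdeal (a b c δ : R) (n k : ℕ) :
    Ideal.span {δ ^ k} * Ideal.span {a, b, c} ^ (n - 2 * k) ≤ layerIdeal a b c δ n k := by
  cases k with
  | zero => simp [layerIdeal]
  | succ k => exact le_sup_right

lemma mul_layerIdeal_le (a b c δ : R) {n k : ℕ} (hk : 2 * k ≤ n) :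
    Ideal.span {a, b, c} * layerIdeal a b c δ n k ≤ layerIdeal a b c δ (n + 1) k := by
  induction k with
  | zero => exact (pow_succ' _ _).ge
  | succ k ih =>
    rw [layerIdeal, Ideal.mul_sup, mul_left_comm, ← pow_succ', layerIdeal,
      show n - 2 * (k + 1) + 1 = n + 1 - 2 * (k + 1) by omega]
    exact sup_le_sup_right (ih (by omega)) _

lemma δ_mul_layerIdeal_le (a b c δ : R) (n k : ℕ) :
    Ideal.span {δ} * layerIdeal a b c δ n k ≤ layerIdeal a b c δ (n + 2) (k + 1) := by
  induction k with
  | zero =>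
    simp [layerIdeal]
  | succ k ih =>
    rw [layerIdeal, Ideal.mul_sup, ← mul_assoc, Ideal.span_singleton_mul_span_singleton,
      ← pow_succ', show n - 2 * (k + 1) = n + 2 - 2 * (k + 1 + 1) by omega]
    exact sup_le (ih.trans (layerIdeal_mono _ _ _ _ _ (Nat.le_succ _))) le_sup_right

lemma symbolicIdeal_le_layerIdeal (a b c δ : R) (n : ℕ) :
    symbolicIdeal a b c δ n ≤ layerIdeal a b c δ n (n / 2) := by
  induction n using Nat.twoStepInduction with
  | zero => simp [layerIdeal]
  | one => simp [layerIdeal, symbolicIdeal]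
  | more n ih ih' =>
    rw [symbolicIdeal, show (n + 2) / 2 = n / 2 + 1 by omega]
    refine sup_le ?_ ((Ideal.mul_mono_right ih).trans (δ_mul_layerIdeal_le _ _ _ _ _ _))
    refine (Ideal.mul_mono_right ih').trans ((mul_layerIdeal_le _ _ _ _ (by omega)).trans ?_)
    exact layerIdeal_mono _ _ _ _ _ (by omega)

lemma pow_le_symbolicIdeal (a b c δ : R) (n : ℕ) :
    Ideal.span {a, b, c} ^ n ≤ symbolicIdeal a b c δ n := by
  induction n with
  | zero => exact le_top
  | succ n ih =>
    rw [pow_succ']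
    exact Ideal.mul_le.mpr fun i hi u hu => mul_mem_symbolicIdeal hi (ih hu)

namespace IsMinorSystem

variable {x y z a b c δ : R}

lemma layerIdeal_le_pow (h : IsMinorSystem x y z a b c δ) {n k : ℕ} (hk : 2 * k ≤ n) :
    layerIdeal a b c δ n k ≤ Ideal.span {x, y, z} ^ (2 * n - k) := by
  induction k with
  | zero =>
    rw [layerIdeal, Nat.sub_zero, pow_mul]
    exact Ideal.pow_right_mono h.span_le n
  | succ k ih =>
    refine sup_le ((ih (by omega)).trans (Ideal.pow_le_pow_right (by omega))) ?_
    rw [show 2 * n - (k + 1) = 3 * (k + 1) + 2 * (n - 2 * (k + 1)) by omega,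
      pow_add (Ideal.span {x, y, z}), pow_mul, pow_mul]
    exact Ideal.mul_mono ((Ideal.span_singleton_le_iff_mem _).mpr
      (Ideal.pow_mem_pow h.δ_mem _)) (Ideal.pow_right_mono h.span_le _)

lemma mul_δ_le (h : IsMinorSystem x y z a b c δ) :
    Ideal.span {x, y, z} * Ideal.span {δ} ≤ Ideal.span {a, b, c} ^ 2 := by
  have ha : a ∈ Ideal.span {a, b, c} := Ideal.subset_span (by simp)
  have hb : b ∈ Ideal.span {a, b, c} := Ideal.subset_span (by simp)
  have hc : c ∈ Ideal.span {a, b, c} := Ideal.subset_span (by simp)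
  have hmem : ∀ {s t : R}, s ∈ Ideal.span {a, b, c} → t ∈ Ideal.span {a, b, c} →
      s * t ∈ Ideal.span {a, b, c} ^ 2 := fun hs ht => pow_two (Ideal.span {a, b, c}) ▸
    Ideal.mul_mem_mul hs ht
  rw [Ideal.span_mul_span', Set.mul_singleton, Ideal.span_le]
  rintro _ ⟨_, rfl | rfl | rfl, rfl⟩
  · simp only [SetLike.mem_coe, h.x_mul_δ, pow_two b]
    exact sub_mem (hmem hb hb) (hmem ha hc)
  · simp only [SetLike.mem_coe, h.y_mul_δ, pow_two c]
    exact sub_mem (Ideal.mul_mem_left _ _ (hmem hc hc)) (hmem ha hb)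
  · simp only [SetLike.mem_coe, h.z_mul_δ, pow_two a, mul_assoc]
    exact sub_mem (hmem ha ha) (Ideal.mul_mem_left _ _ (hmem hb hc))

lemma mul_layerIdeal_succ_le (h : IsMinorSystem x y z a b c δ) {n k : ℕ}
    (hk : 2 * (k + 1) ≤ n) :
    Ideal.span {x, y, z} * layerIdeal a b c δ n (k + 1) ≤ layerIdeal a b c δ n k := by
  rw [layerIdeal, Ideal.mul_sup]
  refine sup_le Ideal.mul_le_right ?_
  rw [← mul_assoc, pow_succ, mul_comm (δ ^ k), ← Ideal.span_singleton_mul_span_singleton,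
    ← mul_assoc]
  refine (Ideal.mul_mono_left (Ideal.mul_mono_left h.mul_δ_le)).trans ?_
  rw [mul_comm (_ ^ 2), mul_assoc, ← pow_add, show 2 + (n - 2 * (k + 1)) = n - 2 * k by omega]
  exact δ_pow_mul_le_layerIdeal a b c δ n k

lemma pow_mul_layerIdeal_le (h : IsMinorSystem x y z a b c δ) {n k : ℕ} (hk : 2 * k ≤ n) :
    Ideal.span {x, y, z} ^ k * layerIdeal a b c δ n k ≤ Ideal.span {a, b, c} ^ n := by
  induction k with
  | zero => simp [layerIdeal]
  | succ k ih =>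
    rw [pow_succ, mul_assoc]
    exact (Ideal.mul_mono_right (h.mul_layerIdeal_succ_le hk)).trans (ih (by omega))

/-- The order of an element of the top layer detects whether it belongs to the previous one. -/
lemma mem_layerIdeal_of_mem_succ (h : IsMinorSystem x y z a b c δ) {n k : ℕ}
    (hk : 2 * (k + 1) ≤ n) {u : R} (hu : u ∈ layerIdeal a b c δ n (k + 1))
    (hu' : u ∈ Ideal.span {x, y, z} ^ (2 * n - k)) : u ∈ layerIdeal a b c δ n k := by
  obtain ⟨p, hp, q, hq, rfl⟩ := Submodule.mem_sup.mp hu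
  obtain ⟨w, hw, rfl⟩ := Ideal.mem_span_singleton_mul.mp hq
  obtain ⟨ι, _, v, -, hspan, hind⟩ := h.exists_generators (n - 2 * (k + 1))
  rw [hspan] at hw
  obtain ⟨r, rfl⟩ := Ideal.mem_span_range_iff_exists_fun.mp hw
  refine add_mem hp (h.mul_layerIdeal_succ_le hk ?_)
  have hr := hind (k + 1) r (by
    rw [show 2 * (n - 2 * (k + 1)) + 3 * (k + 1) + 1 = 2 * n - k by omega]
    exact (Submodule.add_mem_iff_right _ (h.layerIdeal_le_pow (by omega) hp)).mp hu')
  rw [Finset.mul_sum]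
  refine sum_mem fun i _ => ?_
  rw [mul_left_comm]
  refine Ideal.mul_mem_mul (hr i) (δ_pow_mul_le_layerIdeal a b c δ n (k + 1)
    (Ideal.mul_mem_mul (Ideal.mem_span_singleton_self _) ?_))
  rw [hspan]
  exact Ideal.subset_span ⟨i, rfl⟩

lemma mem_layerIdeal_of_mem_add (h : IsMinorSystem x y z a b c δ) {n k : ℕ} (j : ℕ)
    (hk : 2 * (k + j) ≤ n) {u : R} (hu : u ∈ layerIdeal a b c δ n (k + j))
    (hu' : u ∈ Ideal.span {x, y, z} ^ (2 * n - k)) : u ∈ layerIdeal a b c δ n k := by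
  induction j with
  | zero => exact hu
  | succ j ih =>
    exact ih (by omega) (h.mem_layerIdeal_of_mem_succ (k := k + j) hk hu
      (Ideal.pow_le_pow_right (by omega) hu'))

theorem colon_eq_layerIdeal (h : IsMinorSystem x y z a b c δ) {n k : ℕ} (hk : 2 * k ≤ n) :
    Submodule.colon ((Ideal.span {a, b, c} ^ n : Ideal R) : Submodule R R)
      ((Ideal.span {x, y, z} ^ k : Ideal R) : Submodule R R) = layerIdeal a b c δ n k := by
  refine le_antisymm (fun u hu => ?_) fun u hu => Submodule.mem_colon.mpr fun p hp => ?_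
  · have hxu : x ^ k * u ∈ Ideal.span {a, b, c} ^ n := by
      rw [mul_comm]
      exact Submodule.mem_colon.mp hu _ (Ideal.pow_mem_pow IsRegularTriple.x_mem k)
    have hs : ∀ j, x ^ j * u ∈ symbolicIdeal a b c δ n → u ∈ symbolicIdeal a b c δ n := by
      intro j hj
      induction j with
      | zero => simpa using hj
      | succ j ih =>
        exact ih (h.mem_symbolicIdeal_of_x_mul_mem n (by rwa [← mul_assoc, ← pow_succ']))
    have hu1 := symbolicIdeal_le_layerIdeal a b c δ n (hs k (pow_le_symbolicIdeal a b c δ n hxu))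
    have hu2 : u ∈ Ideal.span {x, y, z} ^ (2 * n - k) := by
      refine h.mem_pow_of_x_pow_mul_mem k ?_
      rw [Nat.sub_add_cancel (by omega)]
      exact h.layerIdeal_le_pow (k := 0) (by omega) hxu
    refine h.mem_layerIdeal_of_mem_add (n / 2 - k) (by omega) ?_ hu2
    rwa [Nat.add_sub_cancel' (by omega)]
  · rw [smul_eq_mul, mul_comm]
    exact h.pow_mul_layerIdeal_le hk (Ideal.mul_mem_mul hp hu)

/-- Consecutive layers differ by a vector space over the residue field, with one basis vector for
each minimal generator of `(a, b, c) ^ (n - 2 * k)`. -/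
theorem length_layerIdeal_quotient [IsLocalRing R] (h : IsMinorSystem x y z a b c δ)
    (hM : IsLocalRing.maximalIdeal R = Ideal.span {x, y, z}) {n k : ℕ} (hk : 2 * (k + 1) ≤ n) :
    Module.length R (layerIdeal a b c δ n (k + 1) ⧸
      Submodule.comap (layerIdeal a b c δ n (k + 1)).subtype (layerIdeal a b c δ n k)) =
      ((n - 2 * (k + 1) + 2).choose 2 : ℕ) := by
  classical
  obtain ⟨ι, _, v, hcard, hspan, hind⟩ := h.exists_generators (n - 2 * (k + 1))
  have hvmem : ∀ i, δ ^ (k + 1) * v i ∈ layerIdeal a b c δ n (k + 1) := fun i =>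
    δ_pow_mul_le_layerIdeal a b c δ n (k + 1) (Ideal.mul_mem_mul (Ideal.mem_span_singleton_self _)
      (hspan ▸ Ideal.subset_span ⟨i, rfl⟩))
  let N := Submodule.comap (layerIdeal a b c δ n (k + 1)).subtype (layerIdeal a b c δ n k)
  let φ : (ι → R) →ₗ[R] layerIdeal a b c δ n (k + 1) :=
    Fintype.linearCombination R fun i => ⟨δ ^ (k + 1) * v i, hvmem i⟩
  have hφ : ∀ r, (φ r : R) = δ ^ (k + 1) * ∑ i, r i * v i := by
    intro r
    simp only [φ, Fintype.linearCombination_apply, Submodule.coe_sum, Submodule.coe_smul,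
      smul_eq_mul, Finset.mul_sum]
    exact Finset.sum_congr rfl fun i _ => mul_left_comm _ _ _
  have hsurj : Function.Surjective (N.mkQ ∘ₗ φ) := by
    intro t
    obtain ⟨⟨u, hu⟩, rfl⟩ := N.mkQ_surjective t
    obtain ⟨p, hp, q, hq, rfl⟩ := Submodule.mem_sup.mp hu
    obtain ⟨w, hw, rfl⟩ := Ideal.mem_span_singleton_mul.mp hq
    rw [hspan] at hw
    obtain ⟨r, rfl⟩ := Ideal.mem_span_range_iff_exists_fun.mp hw
    refine ⟨r, (Submodule.Quotient.eq N).mpr ?_⟩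
    change (φ r : R) - _ ∈ layerIdeal a b c δ n k
    rw [hφ, sub_add_cancel_right]
    exact neg_mem hp
  have hker : LinearMap.ker (N.mkQ ∘ₗ φ) =
      Submodule.pi Set.univ fun _ : ι => (IsLocalRing.maximalIdeal R : Submodule R R) := by
    ext r
    have hmem : r ∈ LinearMap.ker (N.mkQ ∘ₗ φ) ↔
        δ ^ (k + 1) * ∑ i, r i * v i ∈ layerIdeal a b c δ n k := by
      rw [← hφ, LinearMap.mem_ker, LinearMap.comp_apply, Submodule.mkQ_apply,
        Submodule.Quotient.mk_eq_zero]
      rfl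
    rw [hmem, hM]
    simp only [Submodule.mem_pi, Set.mem_univ, true_imp_iff]
    constructor
    · intro hr
      refine hind (k + 1) r ?_
      rw [show 2 * (n - 2 * (k + 1)) + 3 * (k + 1) + 1 = 2 * n - k by omega]
      exact h.layerIdeal_le_pow (by omega) hr
    · intro hr
      rw [Finset.mul_sum]
      refine sum_mem fun i _ => h.mul_layerIdeal_succ_le hk ?_
      rw [mul_left_comm]
      exact Ideal.mul_mem_mul (hr i) (hvmem i)
  have e := (LinearMap.quotKerEquivOfSurjective _ hsurj).symm ≪≫ₗ
    Submodule.quotEquivOfEq _ _ hker ≪≫ₗ Submodule.quotientPi _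
  have hsimple : Module.length R (R ⧸ (IsLocalRing.maximalIdeal R : Submodule R R)) = 1 := by
    rw [Module.length_eq_one_iff, isSimpleModule_iff_isCoatom]
    exact (IsLocalRing.maximalIdeal.isMaximal R).out
  rw [e.length_eq, Module.length_pi_of_fintype]
  simp [hsimple, hcard]

end IsMinorSystem

end MinorSystem

/-- A module of finite length has a composition series of that length. -/
lemma hasLength_of_length_eq {R M : Type*} [CommRing R] [AddCommGroup M] [Module R M] {n : ℕ}
    (h : Module.length R M = n) : HasLength R M n := by
  have hfin : IsFiniteLength R M := Module.length_ne_top_iff.mp (by simp [h])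
  obtain ⟨s, hs, hs'⟩ := isFiniteLength_iff_exists_compositionSeries.mp hfin
  refine ⟨s, hs, hs', ?_⟩
  have := Module.length_compositionSeries s hs hs'
  rw [h] at this
  exact_mod_cast this

/-- Let `R` be a 3-dimensional regular local ring with `m = (x, y, z)` and
`I = (z² - x²y, x³ - yz, y² - xz)`.  For `n ≥ 2` and `1 ≤ k ≤ ⌊n/2⌋`,
`length((Iⁿ :_R m^k)/(Iⁿ :_R m^{k-1})) = C(n - 2k + 2, 2)`. -/
theorem colon_layers_length
    {R : Type*} [CommRing R] [IsNoetherianRing R] [IsLocalRing R]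
    (hdim : ringKrullDim R = 3)
    (x y z : R) (hreg : maximalIdeal R = Ideal.span {x, y, z})
    (I : Ideal R)
    (hI : I = Ideal.span {z ^ 2 - x ^ 2 * y, x ^ 3 - y * z, y ^ 2 - x * z}) :
    ∀ n : ℕ, 2 ≤ n → ∀ k : ℕ, 1 ≤ k → k ≤ n / 2 →
      HasLength R
        (↥(Submodule.colon ((I ^ n : Ideal R) : Submodule R R)
            ((maximalIdeal R ^ k : Ideal R) : Submodule R R)) ⧸
          Submodule.comap
            (Submodule.colon ((I ^ n : Ideal R) : Submodule R R)
              ((maximalIdeal R ^ k : Ideal R) : Submodule R R)).subtype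
            (Submodule.colon ((I ^ n : Ideal R) : Submodule R R)
              ((maximalIdeal R ^ (k - 1) : Ideal R) : Submodule R R)))
        ((n - 2 * k + 2).choose 2) := by
  intro n _ k hk hkn
  obtain ⟨k, rfl⟩ := Nat.exists_eq_add_of_le' hk
  have h : IsMinorSystem x y z (z ^ 2 - x ^ 2 * y) (x ^ 3 - y * z) (y ^ 2 - x * z)
      (x ^ 5 - 3 * x ^ 2 * y * z + z ^ 3 + x * y ^ 3) :=
    { isRegularTriple hdim hreg with a_eq := rfl, b_eq := rfl, c_eq := rfl, δ_eq := rfl }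
  refine hasLength_of_length_eq ?_
  rw [hI, Nat.add_sub_cancel, hreg, h.colon_eq_layerIdeal (k := k + 1) (by omega),
    h.colon_eq_layerIdeal (k := k) (by omega)]
  exact h.length_layerIdeal_quotient hreg (by omega)
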